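/- Collapse of probabilistic entailment into classical entailment: let Δ be a set of propositional formulas, α a propositional formula, and p, q ∈ (0,1] with p ≥ q. Then Δ ⊨ α (classical entailment) if and only if Δ ⊨_{pq} α (pq-entailment). -/

import Mathlib

open MeasureTheory

/-- Propositional formulas over atoms `B_j`, `j : ℕ`, with `¬` and `→`. -/
inductive PropForm : Type
  | atom : ℕ → PropForm
  | neg : PropForm → PropForm
  | imp : PropForm → PropForm → PropForm
  deriving DecidableEq

namespace PropForm

def conj (α β : PropForm) : PropForm := neg (imp α (neg β))
def disj (α β : PropForm) : PropForm := imp (neg α) β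
def biimp (α β : PropForm) : PropForm := conj (imp α β) (imp β α)
def top : PropForm := imp (atom 0) (atom 0)
def bot : PropForm := neg top

/-- Satisfaction of a formula by a valuation `v : ℕ → Bool` (a subset of ℕ). -/
def sat (v : ℕ → Bool) : PropForm → Prop
  | atom j => v j = true
  | neg α => ¬ sat v α
  | imp α β => sat v α → sat v β

/-- The finite set `B_α` of indices of atoms occurring in `α`. -/
def atoms : PropForm → Finset ℕ
  | atom j => {j}
  | neg α => atoms α
  | imp α β => atoms α ∪ atoms β

end PropForm

/-- `⊨ α`: every valuation satisfies `α`. -/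
def Valid (α : PropForm) : Prop := ∀ v, PropForm.sat v α

/-- `α ⊨ β`. -/
def Entails (α β : PropForm) : Prop := ∀ v, PropForm.sat v α → PropForm.sat v β

/-- `Δ ⊨ α`. -/
def SetEntails (Δ : Set PropForm) (α : PropForm) : Prop :=
  ∀ v, (∀ δ ∈ Δ, PropForm.sat v δ) → PropForm.sat v α

/-- Conjunction of a list of formulas (empty conjunction is `⊤`). -/
def bigConj (l : List PropForm) : PropForm := l.foldr PropForm.conj PropForm.top

/-- Disjunction of a list of formulas (empty disjunction is `⊥`). -/
def bigDisj (l : List PropForm) : PropForm := l.foldr PropForm.disj PropForm.bot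

/-- `φ_A^U = (⋀_{j∈U} B_j) ∧ (⋀_{j∈A∖U} ¬B_j)`. -/
def phi (A U : Finset ℕ) : PropForm :=
  PropForm.conj (bigConj ((U.sort (· ≤ ·)).map PropForm.atom))
    (bigConj (((A \ U).sort (· ≤ ·)).map (fun j => PropForm.neg (PropForm.atom j))))

/-- The space of valuations, `2^ℕ` identified with `{0,1}^ℕ`, with the product σ-algebra. -/
abbrev Val := ℕ → Bool

/-- `v ∩ A` for a valuation `v` and a finite `A ⊆ ℕ`. -/
def restrict (v : Val) (A : Finset ℕ) : Finset ℕ := A.filter (fun j => v j = true)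

/-- `Prob_μ(α) = μ{v : v ⊨ α}`. -/
noncomputable def Prob (μ : Measure Val) (α : PropForm) : ℝ :=
  (μ {v | PropForm.sat v α}).toReal

/-- `Δ ⊨_{pq} α`: there is a finite `Φ ⊆ Δ` such that every stochastic valuation giving
probability at least `p` to `⋀Φ` gives probability at least `q` to `α` (`⋀∅ = ⊤`). -/
def pqEntails (Δ : Set PropForm) (α : PropForm) (p q : ℝ) : Prop :=
  ∃ Φ : Finset PropForm, ↑Φ ⊆ Δ ∧
    ∀ μ : MeasureTheory.Measure Val, IsProbabilityMeasure μ →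
      p ≤ Prob μ (bigConj Φ.toList) → q ≤ Prob μ α

theorem isClopen_sat (α : PropForm) : IsClopen {v : Val | PropForm.sat v α} := by
  induction α with
  | atom j =>
    have h : Continuous (fun v : Val => v j) := continuous_apply j
    exact (isClopen_discrete ({true} : Set Bool)).preimage h
  | neg α ih => exact ih.compl
  | imp α β iha ihb =>
    have h := iha.compl.union ihb
    have e : {v : Val | PropForm.sat v (α.imp β)}
        = {v : Val | PropForm.sat v α}ᶜ ∪ {v : Val | PropForm.sat v β} := by
      ext v
      simp only [PropForm.sat, Set.mem_ofPred_eq, Set.mem_union, Set.mem_compl_iff]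
      tauto
    rw [e]
    exact h

theorem sat_bigConj (v : Val) (l : List PropForm) :
    PropForm.sat v (bigConj l) ↔ ∀ δ ∈ l, PropForm.sat v δ := by
  induction l with
  | nil => simp [bigConj, PropForm.top, PropForm.sat]
  | cons a l ih =>
    have e : bigConj (a :: l) = PropForm.conj a (bigConj l) := rfl
    rw [e, List.forall_mem_cons, ← ih]
    simp only [PropForm.conj, PropForm.sat]
    tauto

theorem exists_finite_entails (Δ : Set PropForm) (α : PropForm) (h : SetEntails Δ α) :
    ∃ Φ : Finset PropForm, ↑Φ ⊆ Δ ∧ ∀ v, (∀ δ ∈ Φ, PropForm.sat v δ) → PropForm.sat v α := by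
  classical
  have hc : IsCompact {v : Val | PropForm.sat v α}ᶜ :=
    (isClopen_sat α).compl.isClosed.isCompact
  obtain ⟨u, hu⟩ := hc.elim_finite_subfamily_closed
    (fun δ : Δ => {v : Val | PropForm.sat v δ.1}) (fun δ => (isClopen_sat δ.1).isClosed) (by
      ext v
      simp only [Set.mem_inter_iff, Set.mem_compl_iff, Set.mem_ofPred_eq, Set.mem_iInter,
        Set.mem_empty_iff_false, iff_false, not_and]
      intro hv hall
      exact hv (h v fun δ hδ => hall ⟨δ, hδ⟩))
  refine ⟨u.image Subtype.val, ?_, ?_⟩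
  · intro x hx
    simp only [Finset.coe_image, Set.mem_image] at hx
    obtain ⟨y, _, rfl⟩ := hx
    exact y.2
  · intro v hv
    by_contra hn
    have : v ∈ (∅ : Set Val) := by
      rw [← hu]
      refine ⟨hn, ?_⟩
      simp only [Set.mem_iInter, Set.mem_ofPred_eq]
      intro δ hδ
      exact hv _ (Finset.mem_image_of_mem _ hδ)
    exact this

theorem pq_entailment_collapse (Δ : Set PropForm) (α : PropForm) (p q : ℝ)
    (hp0 : 0 < p) (hp1 : p ≤ 1) (hq0 : 0 < q) (hq1 : q ≤ 1) (hpq : q ≤ p) :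
    SetEntails Δ α ↔ pqEntails Δ α p q := by
  constructor
  · intro h
    obtain ⟨Φ, hΦ, hent⟩ := exists_finite_entails Δ α h
    refine ⟨Φ, hΦ, fun μ hμ hp => hpq.trans (hp.trans ?_)⟩
    refine ENNReal.toReal_mono (measure_ne_top μ _) (measure_mono fun v hv => ?_)
    refine hent v fun δ hδ => ?_
    exact (sat_bigConj v _).1 hv δ (Finset.mem_toList.2 hδ)
  · rintro ⟨Φ, hΦ, hent⟩ v hv
    by_contra hn
    have hs : v ∈ {w : Val | PropForm.sat w (bigConj Φ.toList)} :=
      (sat_bigConj v _).2 fun δ hδ => hv δ (hΦ (Finset.mem_toList.1 hδ))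
    have hn' : v ∉ {w : Val | PropForm.sat w α} := hn
    have h1 := hent (Measure.dirac v) inferInstance (by
      unfold Prob
      rw [Measure.dirac_apply' v (isClopen_sat _).isOpen.measurableSet, Set.indicator_of_mem hs]
      simpa using hp1)
    unfold Prob at h1
    rw [Measure.dirac_apply' v (isClopen_sat _).isOpen.measurableSet, Set.indicator_of_notMem hn'] at h1
    simp at h1
    linarith
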